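/- arXiv:1601.07988 — 4 statements merged into one kernel-verified Lean document; each statement's English description precedes it below -/
import Mathlib

section
/- For every n ≥ 2, the number of words L ∈ 𝓛_n with exactly one P1-match (equivalently, lattice paths from (0,0) to (n,n) with exactly one east step below the subdiagonal y = x − 1) equals 4·(2n−1)! / ((n−2)!·(n+2)!). -/
/-!
Words over the alphabet {E, N} are encoded as `List Bool`,
with `true` representing an east step `E` and `false` a north step `N`.
The word `w = w_1 ⋯ w_{2n}` corresponds to the lattice path from `(0,0)` to
`(n,n)` whose `j`-th step is east if `w_j = true` and north if `w_j = false`.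
-/

/-- `w ∈ 𝓛_n`: the word `w` has exactly `n` `E`'s and `n` `N`'s. -/
def memL (n : ℕ) (w : List Bool) : Prop :=
  w.count true = n ∧ w.count false = n

/-- The (0-indexed, increasing) list of positions at which the letter `b` occurs in `w`. -/
def occPos (w : List Bool) (b : Bool) : List ℕ :=
  (List.range w.length).filter (fun j => w.getD j (!b) == b)

/-- `ps_w({i, i+1})` (with `i` 1-indexed): the length-4 word obtained from `w` by
deleting, for each `j ∉ {i, i+1}`, the `j`-th occurrence of `E` and the `j`-th
occurrence of `N` (counted from left to right); i.e. the word formed by the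
`i`-th and `(i+1)`-th occurrences of `E` and of `N`, read in their original order. -/
def pairedSubword (w : List Bool) (i : ℕ) : List Bool :=
  let keep : List ℕ := [(occPos w true).getD (i-1) 0, (occPos w true).getD i 0,
                        (occPos w false).getD (i-1) 0, (occPos w false).getD i 0]
  ((List.range w.length).filter (fun j => keep.contains j)).map (fun j => w.getD j true)

/-- `P`-mch(w): the number of paired steps `i` with `1 ≤ i ≤ n-1` at which the
paired pattern `P` matches in `w ∈ 𝓛_n`. -/
def pmch (n : ℕ) (P w : List Bool) : ℕ :=
  ((Finset.Icc 1 (n-1)).filter (fun i => pairedSubword w i = P)).card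

def P1 : List Bool := [true, true, false, false]   -- EENN
def P2 : List Bool := [true, false, true, false]   -- ENEN
def P3 : List Bool := [false, true, true, false]   -- NEEN
def P4 : List Bool := [true, false, false, true]   -- ENNE
def P5 : List Bool := [false, true, false, true]   -- NENE
def P6 : List Bool := [false, false, true, true]   -- NNEE


/-! ### Counting by recursion -/

/-- Number of up-steps starting at height at least one, for the walk `w` started at height `h`. -/
def badSteps : ℤ → List Bool → ℕ
  | _, [] => 0
  | h, true :: w => (if 1 ≤ h then 1 else 0) + badSteps (h + 1) w
  | h, false :: w => badSteps (h - 1) w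

/-- Walks of length `m` from height `h` to height `0` with exactly `r` bad steps. -/
def walkSet (m : ℕ) (h : ℤ) (r : ℕ) : Set (List Bool) :=
  {w | w.length = m ∧ h + w.count true - w.count false = 0 ∧ badSteps h w = r}

lemma walkSet_finite (m : ℕ) (h : ℤ) (r : ℕ) : (walkSet m h r).Finite :=
  (List.finite_length_eq Bool m).subset fun _ hw => hw.1

/-- Number of walks of length `m` with displacement `d`. -/
def walkNum : ℕ → ℤ → ℤ
  | 0, d => if d = 0 then 1 else 0
  | m + 1, d => walkNum m (d - 1) + walkNum m (d + 1)

lemma walkSet_low (m : ℕ) (h : ℤ) (r : ℕ) (hh : h ≤ 0) :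
    (walkSet (m + 1) h r).ncard = (walkSet m (h + 1) r).ncard + (walkSet m (h - 1) r).ncard := by
  have h1 : walkSet (m + 1) h r =
      (List.cons true '' walkSet m (h + 1) r) ∪ (List.cons false '' walkSet m (h - 1) r) := by
    ext w
    rcases w with _ | ⟨b, w⟩
    · simp [walkSet]
    · cases b
      · simp [walkSet, badSteps]
        grind
      · simp [walkSet, badSteps]
        grind
  rw [h1, Set.ncard_union_eq _ ((walkSet_finite _ _ _).image _) ((walkSet_finite _ _ _).image _),
    Set.ncard_image_of_injective _ (List.cons_injective),
    Set.ncard_image_of_injective _ (List.cons_injective)]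
  rw [Set.disjoint_left]
  rintro _ ⟨a, _, rfl⟩ ⟨b, _, hb⟩
  simp at hb

lemma walkSet_high_succ (m : ℕ) (h : ℤ) (r : ℕ) (hh : 1 ≤ h) :
    (walkSet (m + 1) h (r + 1)).ncard =
      (walkSet m (h + 1) r).ncard + (walkSet m (h - 1) (r + 1)).ncard := by
  have h1 : walkSet (m + 1) h (r + 1) =
      (List.cons true '' walkSet m (h + 1) r) ∪
        (List.cons false '' walkSet m (h - 1) (r + 1)) := by
    ext w
    rcases w with _ | ⟨b, w⟩
    · simp [walkSet]
    · cases b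
      · simp [walkSet, badSteps]
        grind
      · simp [walkSet, badSteps]
        grind
  rw [h1, Set.ncard_union_eq _ ((walkSet_finite _ _ _).image _) ((walkSet_finite _ _ _).image _),
    Set.ncard_image_of_injective _ (List.cons_injective),
    Set.ncard_image_of_injective _ (List.cons_injective)]
  rw [Set.disjoint_left]
  rintro _ ⟨a, _, rfl⟩ ⟨b, _, hb⟩
  simp at hb

lemma walkSet_high_zero (m : ℕ) (h : ℤ) (hh : 1 ≤ h) :
    (walkSet (m + 1) h 0).ncard = (walkSet m (h - 1) 0).ncard := by
  have h1 : walkSet (m + 1) h 0 = (List.cons false '' walkSet m (h - 1) 0) := by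
    ext w
    rcases w with _ | ⟨b, w⟩
    · simp [walkSet]
    · cases b
      · simp [walkSet, badSteps]
        grind
      · simp [walkSet, badSteps]
        grind
  rw [h1, Set.ncard_image_of_injective _ (List.cons_injective)]

lemma walkNum_neg (m : ℕ) (d : ℤ) : walkNum m (-d) = walkNum m d := by
  induction m generalizing d with
  | zero => simp [walkNum]
  | succ m ih =>
    simp only [walkNum]
    rw [← ih (d - 1), ← ih (d + 1), add_comm]
    congr 2 <;> ring

lemma walkSet_zero_zero (h : ℤ) : (walkSet 0 h 0).ncard = if h = 0 then 1 else 0 := by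
  split_ifs with hh
  · have : walkSet 0 h 0 = {[]} := by
      ext w; simp [walkSet]; rintro rfl; simp [badSteps, hh]
    simp [this]
  · have : walkSet 0 h 0 = ∅ := by
      ext w; simp [walkSet]; rintro rfl; simp [hh]
    simp [this]

lemma walkSet_zero_succ (h : ℤ) (r : ℕ) : (walkSet 0 h (r + 1)).ncard = 0 := by
  have : walkSet 0 h (r + 1) = ∅ := by
    ext w; simp [walkSet]; rintro rfl; simp [badSteps]
  simp [this]

lemma count_zero_bad (m : ℕ) (h : ℤ) (hh : h ≤ 1) :
    ((walkSet m h 0).ncard : ℤ) = walkNum m h - walkNum m (4 - h) := by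
  induction m generalizing h with
  | zero =>
    rw [walkSet_zero_zero]
    simp [walkNum]
    omega
  | succ m ih =>
    rcases eq_or_lt_of_le hh with rfl | hlt
    · rw [walkSet_high_zero _ _ le_rfl, ih _ (by norm_num)]
      simp only [walkNum]
      norm_num
      ring
    · rw [walkSet_low _ _ _ (by omega)]
      push_cast
      rw [ih _ (by omega), ih _ (by omega)]
      simp only [walkNum]
      rw [show 4 - (h + 1) = 4 - h - 1 by ring, show 4 - (h - 1) = 4 - h + 1 by ring]
      ring

lemma count_one_bad (m : ℕ) (h : ℤ) (hh : h ≤ 1) :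
    ((walkSet (m + 1) h 1).ncard : ℤ) = walkNum m (3 - h) - walkNum m (5 - h) := by
  induction m generalizing h with
  | zero =>
    rcases eq_or_lt_of_le hh with rfl | hlt
    · rw [walkSet_high_succ _ _ _ le_rfl, walkSet_zero_zero, walkSet_zero_succ]
      simp [walkNum]
    · rw [walkSet_low _ _ _ (by omega), walkSet_zero_succ, walkSet_zero_succ]
      simp [walkNum]
      omega
  | succ m ih =>
    rcases eq_or_lt_of_le hh with rfl | hlt
    · rw [walkSet_high_succ _ _ _ le_rfl, walkSet_high_zero _ _ (by norm_num)]
      norm_num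
      rw [ih _ (by norm_num), count_zero_bad _ _ (by norm_num)]
      simp only [walkNum]
      norm_num
      ring
    · rw [walkSet_low _ _ _ (by omega)]
      push_cast
      rw [ih _ (by omega), ih _ (by omega)]
      simp only [walkNum]
      rw [show 3 - (h + 1) = 3 - h - 1 by ring, show 3 - (h - 1) = 3 - h + 1 by ring,
        show 5 - (h + 1) = 5 - h - 1 by ring, show 5 - (h - 1) = 5 - h + 1 by ring]
      ring

lemma walkNum_big (m : ℕ) (d : ℤ) (hd : (m : ℤ) < d) : walkNum m d = 0 := by
  induction m generalizing d with
  | zero => simp [walkNum]; push_cast at hd; omega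
  | succ m ih =>
    push_cast at hd
    simp only [walkNum]
    rw [ih _ (by omega), ih _ (by omega)]; rfl

lemma walkNum_choose (m k : ℕ) : walkNum m (m - 2 * k) = m.choose k := by
  induction m generalizing k with
  | zero =>
    cases k with
    | zero => simp [walkNum]
    | succ k => simp [walkNum]; omega
  | succ m ih =>
    cases k with
    | zero =>
      have h0 := ih 0
      simp only [walkNum]
      rw [walkNum_big m (_ + 1) (by push_cast; omega)]
      simp at h0 ⊢
      exact h0
    | succ k =>
      have h0 := ih k
      have h1 := ih (k + 1)
      simp only [walkNum]
      rw [Nat.choose_succ_succ]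
      push_cast at h0 h1 ⊢
      rw [← h0, ← h1, add_comm]
      congr 2 <;> ring

lemma count_final (n : ℕ) (hn : 2 ≤ n) :
    ((walkSet (2 * n) 0 1).ncard : ℚ)
      = 4 * (Nat.factorial (2*n-1)) / ((Nat.factorial (n-2)) * (Nat.factorial (n+2))) := by
  obtain ⟨k, rfl⟩ := Nat.exists_eq_add_of_le' hn
  have h1 := count_one_bad (2 * k + 3) 0 (by norm_num)
  have e1 : walkNum (2 * k + 3) (3 - 0) = (2 * k + 3).choose k := by
    rw [← walkNum_choose]; congr 1; push_cast; ring
  rw [e1] at h1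
  rw [show 2 * (k + 2) = 2 * k + 3 + 1 by ring, Nat.add_sub_cancel, Nat.add_sub_cancel]
  have h2 : ((walkSet (2 * k + 3 + 1) 0 1).ncard : ℚ) =
      (2 * k + 3).choose k - (walkNum (2 * k + 3) (5 - 0) : ℤ) := by exact_mod_cast h1
  rw [h2]
  cases k with
  | zero =>
    rw [walkNum_big _ _ (by norm_num)]
    norm_num [Nat.factorial]
  | succ k =>
    have e2 : walkNum (2 * (k + 1) + 3) (5 - 0) = (2 * (k + 1) + 3).choose k := by
      rw [← walkNum_choose]; congr 1; push_cast; ring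
    rw [e2]
    push_cast
    rw [Nat.cast_choose ℚ (by omega : k + 1 ≤ 2 * (k + 1) + 3),
      Nat.cast_choose ℚ (by omega : k ≤ 2 * (k + 1) + 3),
      show 2 * (k + 1) + 3 - (k + 1) = k + 4 by omega, show 2 * (k + 1) + 3 - k = k + 5 by omega,
      show k + 1 + 2 + 2 = k + 5 by ring, Nat.factorial_succ k, Nat.factorial_succ (k + 4)]
    have hk := Nat.factorial_ne_zero k
    have hk4 := Nat.factorial_ne_zero (k + 4)
    push_cast
    field_simp
    ring

/-! ### Matches as bad steps -/

/-- Letter `b` occurs at position `j` of `w`. -/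
def letterAt (w : List Bool) (b : Bool) (j : ℕ) : Prop := w.getD j (!b) = b

instance (w : List Bool) (b : Bool) : DecidablePred (letterAt w b) :=
  fun j => inferInstanceAs (Decidable (w.getD j (!b) = b))

lemma letterAt_lt {w : List Bool} {b : Bool} {j : ℕ} (h : letterAt w b j) : j < w.length := by
  by_contra hj
  unfold letterAt at h
  rw [List.getD_eq_default _ _ (by omega)] at h
  cases b <;> simp at h

lemma letterAt_finite (w : List Bool) (b : Bool) : (Set.ofPred (letterAt w b)).Finite :=
  (Set.finite_lt_nat w.length).subset fun _ h => letterAt_lt h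

lemma occPos_getD (w : List Bool) (b : Bool) (k : ℕ) :
    (occPos w b).getD k 0 = Nat.nth (letterAt w b) k := by
  rw [Nat.nth_eq_getD_sort (letterAt_finite w b)]
  congr 1
  apply List.SortedLT.eq_of_mem_iff
  · exact (List.pairwise_lt_range.filter _).sortedLT
  · exact Finset.sortedLT_sort _
  · intro a
    simp only [occPos, List.mem_filter, List.mem_range, Finset.mem_sort, Set.Finite.mem_toFinset,
      beq_iff_eq]
    exact ⟨fun h => h.2, fun h => ⟨letterAt_lt h, h⟩⟩

lemma count_letterAt (w : List Bool) (b : Bool) :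
    Nat.count (letterAt w b) w.length = w.count b := by
  induction w with
  | nil => simp
  | cons a w ih =>
    rw [List.length_cons, Nat.count_succ', List.count_cons, ← ih]
    congr 1
    simp [letterAt]

lemma lt_card_letterAt {w : List Bool} {b : Bool} {k : ℕ} (hk : k < w.count b) :
    ∀ hf : (Set.ofPred (letterAt w b)).Finite, k < hf.toFinset.card := by
  intro hf
  rw [← count_letterAt] at hk
  exact hk.trans_le (Nat.count_le_card _ _)

lemma badSteps_eq_card (h : ℤ) (w : List Bool) :
    badSteps h w = ((Finset.range w.length).filter (fun j => letterAt w true j ∧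
      1 ≤ h + Nat.count (letterAt w true) j - Nat.count (letterAt w false) j)).card := by
  induction w generalizing h with
  | nil => simp [badSteps]
  | cons a w ih =>
    rw [List.length_cons, Finset.range_eq_Ico, ← Finset.insert_Ico_add_one_left_eq_Ico (by omega),
      Finset.filter_insert, ← Finset.image_add_right_Ico, Finset.filter_image]
    have key : ∀ h' : ℤ, (h' = h + (if a = true then 1 else -1)) →
        (Finset.image (fun x => x + 1) ((Finset.Ico 0 w.length).filter
        (fun j => letterAt (a :: w) true (j + 1) ∧
        1 ≤ h + Nat.count (letterAt (a :: w) true) (j + 1)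
          - Nat.count (letterAt (a :: w) false) (j + 1)))).card = badSteps h' w := by
      intro h' hh'
      rw [Finset.card_image_of_injective _ (add_left_injective 1), ih, Finset.range_eq_Ico]
      congr 1
      apply Finset.filter_congr
      intro j _
      rw [Nat.count_succ', Nat.count_succ', hh']
      have e : ∀ b, (fun k => letterAt (a :: w) b (k + 1)) = letterAt w b := by
        intro b; funext k; simp [letterAt]
      have e' : ∀ b, letterAt (a :: w) b (j + 1) = letterAt w b j := fun b => congrFun (e b) j
      simp only [e, e']
      cases a <;> simp [letterAt] <;> grind
    cases a with
    | true =>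
      rw [badSteps, ← key (h + 1) (by simp)]
      split_ifs with h1 h2 h2
      · rw [Finset.card_insert_of_notMem (by simp), add_comm]
      · simp [letterAt] at h2; omega
      · simp [letterAt] at h2; omega
      · simp
    | false =>
      rw [badSteps, ← key (h - 1) (by simp; ring), if_neg (by simp [letterAt])]

lemma match_iff (n : ℕ) (w : List Bool) (hw : memL n w) (i : ℕ) (hi : i + 1 < n) :
    pairedSubword w (i + 1) = P1 ↔
      Nat.nth (letterAt w true) (i + 1) < Nat.nth (letterAt w false) i := by
  have hE := fun k (hk : k < n) => lt_card_letterAt (w := w) (b := true) (k := k) (hw.1.symm ▸ hk)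
  have hN := fun k (hk : k < n) => lt_card_letterAt (w := w) (b := false) (k := k) (hw.2.symm ▸ hk)
  have e0 := Nat.nth_mem i (hE i (by omega))
  have e1 := Nat.nth_mem (i + 1) (hE (i + 1) (by omega))
  have n0 := Nat.nth_mem i (hN i (by omega))
  have n1 := Nat.nth_mem (i + 1) (hN (i + 1) (by omega))
  have he := Nat.nth_lt_nth' (Nat.lt_succ_self i) (hE (i + 1) (by omega))
  have hn := Nat.nth_lt_nth' (Nat.lt_succ_self i) (hN (i + 1) (by omega))
  simp only [pairedSubword, occPos_getD, Nat.add_sub_cancel]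
  simp only [Nat.succ_eq_add_one] at he hn
  generalize Nat.nth (letterAt w true) i = a at *
  generalize Nat.nth (letterAt w true) (i + 1) = b at *
  generalize Nat.nth (letterAt w false) i = c at *
  generalize Nat.nth (letterAt w false) (i + 1) = d at *
  have la := letterAt_lt e0
  have lb := letterAt_lt e1
  have lc := letterAt_lt n0
  have ld := letterAt_lt n1
  have ga : w.getD a true = true := by
    unfold letterAt at e0; rw [List.getD_eq_getElem _ _ la] at e0 ⊢; exact e0
  have gb : w.getD b true = true := by
    unfold letterAt at e1; rw [List.getD_eq_getElem _ _ lb] at e1 ⊢; exact e1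
  have gc : w.getD c true = false := n0
  have gd : w.getD d true = false := n1
  have hs : ((List.range w.length).filter (fun j => [a, b, c, d].contains j)).SortedLT :=
    (List.pairwise_lt_range.filter _).sortedLT
  have hm : ∀ x, x ∈ (List.range w.length).filter (fun j => [a, b, c, d].contains j) ↔
      x ∈ [a, b, c, d] := by
    intro x
    simp
    rintro (rfl | rfl | rfl | rfl) <;> assumption
  generalize (List.range w.length).filter (fun j => [a, b, c, d].contains j) = l at *
  constructor
  · intro hl
    simp only [P1, List.map_eq_cons_iff, List.map_eq_nil_iff] at hl
    obtain ⟨x, _, rfl, hx, y, _, rfl, hy, z, _, rfl, hz, t, _, rfl, ht, rfl⟩ := hl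
    have hp := hs.pairwise
    have hb := (hm b).2 (by simp)
    have hc := (hm c).2 (by simp)
    simp at hp hb hc
    grind
  · intro hbc
    have : l = [a, b, c, d] := by
      apply hs.eq_of_mem_iff _ hm
      apply List.Pairwise.sortedLT
      simp
      omega
    rw [this]
    simp only [List.map_cons, List.map_nil, ga, gb, gc, gd, P1]

lemma pmch_eq (n : ℕ) (w : List Bool) (hw : memL n w) : pmch n P1 w = badSteps 0 w := by
  rw [badSteps_eq_card, pmch]
  have hE := fun k (hk : k < n) => lt_card_letterAt (w := w) (b := true) (k := k) (hw.1.symm ▸ hk)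
  have hN := fun k (hk : k < n) => lt_card_letterAt (w := w) (b := false) (k := k) (hw.2.symm ▸ hk)
  have key : ∀ i, i + 1 < n → (pairedSubword w (i + 1) = P1 ↔
      Nat.count (letterAt w false) (Nat.nth (letterAt w true) (i + 1)) ≤ i) := by
    intro i hi
    rw [match_iff n w hw i hi]
    constructor
    · intro h
      exact Nat.le_nth_of_count_le h.le
    · intro h
      by_contra hc
      have hne : Nat.nth (letterAt w false) i ≠ Nat.nth (letterAt w true) (i + 1) := by
        intro he
        have h1 := Nat.nth_mem (i + 1) (hE (i + 1) (by omega))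
        have h2 := Nat.nth_mem i (hN i (by omega))
        have l1 := letterAt_lt h1
        rw [he] at h2
        generalize Nat.nth (letterAt w true) (i + 1) = x at h1 h2 l1
        unfold letterAt at h1 h2
        rw [List.getD_eq_getElem _ _ l1] at h1 h2
        rw [h1] at h2
        cases h2
      have h3 := Nat.count_strict_mono (Nat.nth_mem i (hN i (by omega)))
        (lt_of_le_of_ne (not_lt.1 hc) hne)
      rw [Nat.count_nth (hN i (by omega))] at h3
      omega
  apply Finset.card_bij' (fun i _ => Nat.nth (letterAt w true) i)
    (fun j _ => Nat.count (letterAt w true) j)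
  · intro i hi
    simp only [Finset.mem_filter, Finset.mem_Icc] at hi
    obtain ⟨i, rfl⟩ := Nat.exists_eq_add_of_le' hi.1.1
    have h1 := Nat.nth_mem (i + 1) (hE (i + 1) (by omega))
    have h2 := (key i (by omega)).1 hi.2
    simp only [Finset.mem_filter, Finset.mem_range]
    refine ⟨letterAt_lt h1, h1, ?_⟩
    rw [Nat.count_nth (hE (i + 1) (by omega))]
    push_cast
    omega
  · intro j hj
    simp only [Finset.mem_filter, Finset.mem_range] at hj
    obtain ⟨h0, h1, h2⟩ := hj
    have h3 : Nat.count (letterAt w true) j < n := by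
      have := Nat.count_strict_mono h1 h0
      rwa [count_letterAt, hw.1] at this
    obtain ⟨i, hi⟩ : ∃ i, Nat.count (letterAt w true) j = i + 1 :=
      Nat.exists_eq_add_of_le' (by omega)
    simp only [Finset.mem_filter, Finset.mem_Icc]
    refine ⟨by omega, ?_⟩
    rw [hi, key i (by omega), ← hi, Nat.nth_count h1]
    omega
  · intro i hi
    simp only [Finset.mem_filter, Finset.mem_Icc] at hi
    exact Nat.count_nth (hE i (by omega))
  · intro j hj
    simp only [Finset.mem_filter, Finset.mem_range] at hj
    exact Nat.nth_count hj.2.1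

theorem count_exactly_one_P1_match (n : ℕ) (hn : 2 ≤ n) :
    ({w : List Bool | memL n w ∧ pmch n P1 w = 1}.ncard : ℚ)
      = 4 * (Nat.factorial (2*n-1)) / ((Nat.factorial (n-2)) * (Nat.factorial (n+2))) := by
  rw [← count_final n hn]
  congr 2
  ext w
  simp only [walkSet, Set.mem_ofPred_eq]
  have hlen := List.count_true_add_count_false w
  constructor
  · rintro ⟨h1, h2⟩
    refine ⟨?_, ?_, pmch_eq n w h1 ▸ h2⟩
    · have := h1.1; have := h1.2; omega
    · rw [h1.1, h1.2]; ring
  · rintro ⟨h1, h2, h3⟩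
    have hm : memL n w := ⟨by omega, by omega⟩
    exact ⟨hm, (pmch_eq n w hm).trans h3⟩
end

section
/- For every n ≥ 1, the total number of P2-matches over all words in 𝓛_n satisfies Σ_{L ∈ 𝓛_n} P2-mch(L) = 4^{n−1} − binom(2n−1, n−1). -/
theorem conv_central (n : ℕ) :
    ∑ p ∈ Finset.HasAntidiagonal.antidiagonal n, p.1.centralBinom * p.2.centralBinom = 4 ^ n := by
  have hT : ∀ n : ℕ, 2 * ∑ p ∈ Finset.HasAntidiagonal.antidiagonal n, p.1 * (p.1.centralBinom * p.2.centralBinom)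
      = n * ∑ p ∈ Finset.HasAntidiagonal.antidiagonal n, p.1.centralBinom * p.2.centralBinom := by
    intro n
    have h := Finset.Nat.sum_antidiagonal_swap (n := n)
      (f := fun p => p.1 * (p.1.centralBinom * p.2.centralBinom))
    rw [two_mul]
    nth_rewrite 1 [← h]
    rw [← Finset.sum_add_distrib, Finset.mul_sum]
    apply Finset.sum_congr rfl
    intro p hp
    rw [Finset.HasAntidiagonal.mem_antidiagonal] at hp
    subst hp
    simp only [Prod.fst_swap, Prod.snd_swap]
    ring
  induction n with
  | zero => simp
  | succ n ih =>
    have h1 := hT (n + 1)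
    rw [Finset.Nat.sum_antidiagonal_succ] at h1
    have h2 : ∑ p ∈ Finset.HasAntidiagonal.antidiagonal n,
        ((p.1 + 1) * ((p.1 + 1).centralBinom * p.2.centralBinom))
        = 4 * (∑ p ∈ Finset.HasAntidiagonal.antidiagonal n, p.1 * (p.1.centralBinom * p.2.centralBinom))
          + 2 * ∑ p ∈ Finset.HasAntidiagonal.antidiagonal n, p.1.centralBinom * p.2.centralBinom := by
      rw [Finset.mul_sum, Finset.mul_sum, ← Finset.sum_add_distrib]
      apply Finset.sum_congr rfl
      intro p _
      rw [← mul_assoc, Nat.succ_mul_centralBinom_succ]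
      ring
    have h3 := hT n
    simp only [zero_mul, zero_add] at h1
    rw [h2] at h1
    rw [ih] at h1 h3
    have : (n + 1) * ∑ p ∈ Finset.HasAntidiagonal.antidiagonal (n+1), p.1.centralBinom * p.2.centralBinom
        = (n + 1) * 4 ^ (n + 1) := by
      rw [← h1, pow_succ]
      linarith
    exact Nat.eq_of_mul_eq_mul_left (Nat.succ_pos n) this

theorem central_two (i : ℕ) : (i + 1).centralBinom = 2 * (2 * i + 1).choose i := by
  rw [Nat.centralBinom_eq_two_mul_choose, show 2 * (i + 1) = (2 * i + 1) + 1 by ring,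
    Nat.choose_succ_succ, Nat.choose_symm_half]
  ring

theorem conv_final (m : ℕ) :
    ∑ i ∈ Finset.range m, (2 * i + 1).choose (i + 1) * (2 * (m - i) - 1).choose (m - i - 1)
      = 4 ^ m - (2 * m + 1).choose m := by
  have h := conv_central (m + 1)
  rw [Finset.Nat.sum_antidiagonal_eq_sum_range_succ_mk, Finset.sum_range_succ,
    Finset.sum_range_succ'] at h
  simp only [Nat.sub_self, Nat.centralBinom_zero, Nat.sub_zero, one_mul, mul_one] at h
  have h2 : ∑ i ∈ Finset.range m, (i + 1).centralBinom * (m + 1 - (i + 1)).centralBinom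
      = 4 * ∑ i ∈ Finset.range m,
        (2 * i + 1).choose (i + 1) * (2 * (m - i) - 1).choose (m - i - 1) := by
    rw [Finset.mul_sum]
    apply Finset.sum_congr rfl
    intro i hi
    rw [Finset.mem_range] at hi
    obtain ⟨k, rfl⟩ := Nat.exists_eq_add_of_lt hi
    rw [show i + k + 1 + 1 - (i + 1) = k + 1 by omega, show i + k + 1 - i = k + 1 by omega,
      central_two, central_two, Nat.choose_symm_half,
      show 2 * (k + 1) - 1 = 2 * k + 1 by omega, show k + 1 - 1 = k by omega]
    ring
  rw [h2, central_two, pow_succ] at h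
  omega

/-- Words of length `m` with `a` east steps. -/
def wordsF : ℕ → ℕ → Finset (List Bool)
  | 0, 0 => {[]}
  | 0, _ + 1 => ∅
  | m + 1, 0 => (wordsF m 0).image (List.cons false)
  | m + 1, a + 1 => (wordsF m a).image (List.cons true) ∪ (wordsF m (a + 1)).image (List.cons false)

theorem mem_wordsF (m a : ℕ) (w : List Bool) :
    w ∈ wordsF m a ↔ w.length = m ∧ w.count true = a := by
  induction m generalizing a w with
  | zero => cases a <;> cases w <;> simp [wordsF]
  | succ m ih =>
    cases a with
    | zero =>
      rcases w with _ | ⟨b, w⟩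
      · simp [wordsF]
      · cases b <;> simp [wordsF, ih]
    | succ a =>
      rcases w with _ | ⟨b, w⟩
      · simp [wordsF]
      · cases b <;> simp [wordsF, ih]

theorem card_wordsF (m a : ℕ) : (wordsF m a).card = m.choose a := by
  induction m generalizing a with
  | zero => cases a <;> simp [wordsF]
  | succ m ih =>
    cases a with
    | zero =>
      rw [wordsF, Finset.card_image_of_injective _ (List.cons_injective), ih]; simp
    | succ a =>
      rw [wordsF, Finset.card_union_of_disjoint, Finset.card_image_of_injective _ (List.cons_injective),
        Finset.card_image_of_injective _ (List.cons_injective), ih, ih, Nat.choose_succ_succ]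
      rw [Finset.disjoint_left]
      intro x hx hy
      simp only [Finset.mem_image] at hx hy
      obtain ⟨u, _, rfl⟩ := hx
      obtain ⟨v, _, hv⟩ := hy
      simp at hv

theorem count_add (w : List Bool) : w.count true + w.count false = w.length :=
  List.count_true_add_count_false w

theorem occPos_cons (a : Bool) (w : List Bool) (b : Bool) :
    occPos (a :: w) b = (if a = b then [0] else []) ++ (occPos w b).map (· + 1) := by
  unfold occPos
  rw [List.length_cons, List.range_succ_eq_map, List.filter_cons, List.filter_map]
  cases a <;> cases b <;> simp [Function.comp_def]

theorem occPos_spec (w : List Bool) (b : Bool) (k : ℕ) (hk : k < w.count b) :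
    ∃ p, (occPos w b).getD k 0 = p ∧ k < (occPos w b).length ∧
      w[p]? = some b ∧ (w.take p).count b = k := by
  refine ⟨_, rfl, ?_⟩
  induction w generalizing k with
  | nil => simp at hk
  | cons a w ih =>
    rw [occPos_cons]
    by_cases hab : a = b
    · subst hab
      cases k with
      | zero => simp
      | succ k =>
        simp at hk
        obtain ⟨h0, h1, h2⟩ := ih k hk
        rw [List.getD_eq_getElem _ _ h0] at h1 h2
        simp [h0, h1, h2]
    · rw [List.count_cons_of_ne hab] at hk
      obtain ⟨h0, h1, h2⟩ := ih k hk
      rw [List.getD_eq_getElem _ _ h0] at h1 h2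
      simp [hab, h0, h1, h2]

theorem cnt_succ (w : List Bool) (b : Bool) (m : ℕ) :
    (w.take (m + 1)).count b = (w.take m).count b + if w[m]? = some b then 1 else 0 := by
  rw [List.take_add_one, List.count_append]
  rcases h : w[m]? with _ | c
  · simp
  · cases b <;> cases c <;> simp

theorem cnt_mono (w : List Bool) (b : Bool) {m k : ℕ} (h : m ≤ k) :
    (w.take m).count b ≤ (w.take k).count b :=
  (List.take_sublist_take_left h).count_le b

theorem cnt_lt (w : List Bool) (b : Bool) {m k : ℕ} (h : m < k) (hm : w[m]? = some b) :
    (w.take m).count b < (w.take k).count b := by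
  have h1 := cnt_mono w b (Nat.succ_le_of_lt h)
  have h2 := cnt_succ w b m
  rw [if_pos hm] at h2
  simp only [Nat.succ_eq_add_one] at h1
  omega

theorem cnt_uniq (w : List Bool) (b : Bool) {m k : ℕ} (hm : w[m]? = some b) (hk : w[k]? = some b)
    (h : (w.take m).count b = (w.take k).count b) : m = k := by
  rcases lt_trichotomy m k with h1 | h1 | h1
  · have := cnt_lt w b h1 hm; omega
  · exact h1
  · have := cnt_lt w b h1 hk; omega

theorem filter_iff (w : List Bool) (p1 p2 q1 q2 : ℕ) (hp : p1 < p2) (hq : q1 < q2)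
    (h1 : w[p1]? = some true) (h2 : w[p2]? = some true)
    (h3 : w[q1]? = some false) (h4 : w[q2]? = some false) :
    ((List.range w.length).filter (fun j => [p1, p2, q1, q2].contains j)).map
      (fun j => w.getD j true) = P2 ↔ p1 < q1 ∧ q1 < p2 ∧ p2 < q2 := by
  have l1 := (List.getElem?_eq_some_iff.1 h1).1
  have l2 := (List.getElem?_eq_some_iff.1 h2).1
  have l3 := (List.getElem?_eq_some_iff.1 h3).1
  have l4 := (List.getElem?_eq_some_iff.1 h4).1
  have hs : ((List.range w.length).filter (fun j => [p1, p2, q1, q2].contains j)).Pairwise (· < ·) :=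
    List.Pairwise.filter _ List.pairwise_lt_range
  have hm : ∀ x, x ∈ ((List.range w.length).filter (fun j => [p1, p2, q1, q2].contains j)) ↔
      x = p1 ∨ x = p2 ∨ x = q1 ∨ x = q2 := by
    intro x
    simp only [List.mem_filter, List.mem_range, List.contains_iff_mem, List.mem_cons,
      List.not_mem_nil, or_false]
    constructor
    · exact fun h => h.2
    · intro h
      refine ⟨?_, h⟩
      rcases h with rfl | rfl | rfl | rfl <;> assumption
  generalize (List.range w.length).filter (fun j => [p1, p2, q1, q2].contains j) = l at hs hm
  constructor
  · intro h
    unfold P2 at h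
    rcases l with _ | ⟨a, _ | ⟨b, _ | ⟨c, _ | ⟨d, _ | ⟨e, l⟩⟩⟩⟩⟩
    case cons.cons.cons.cons.nil =>
      simp only [List.map_cons, List.map_nil, List.cons.injEq, and_true, List.getD_eq_getElem?_getD] at h
      simp only [List.mem_cons, List.not_mem_nil, or_false] at hm
      simp only [List.pairwise_cons, List.mem_cons, List.not_mem_nil, or_false] at hs
      obtain ⟨ha, hb, hc, hd⟩ := h
      have e1 := (hm p1).2 (by simp)
      have e2 := (hm p2).2 (by simp)
      have e3 := (hm q1).2 (by simp)
      have e4 := (hm q2).2 (by simp)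
      have hab := hs.1 b (by simp)
      have hbc := hs.2.1 c (by simp)
      have hcd := hs.2.2.1 d (by simp)
      have f1 : p1 = a ∨ p1 = c := by
        rcases e1 with e | e | e | e
        · exact Or.inl e
        · rw [← e, h1] at hb; simp at hb
        · exact Or.inr e
        · rw [← e, h1] at hd; simp at hd
      have f2 : p2 = a ∨ p2 = c := by
        rcases e2 with e | e | e | e
        · exact Or.inl e
        · rw [← e, h2] at hb; simp at hb
        · exact Or.inr e
        · rw [← e, h2] at hd; simp at hd
      have f3 : q1 = b ∨ q1 = d := by
        rcases e3 with e | e | e | e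
        · rw [← e, h3] at ha; simp at ha
        · exact Or.inl e
        · rw [← e, h3] at hc; simp at hc
        · exact Or.inr e
      have f4 : q2 = b ∨ q2 = d := by
        rcases e4 with e | e | e | e
        · rw [← e, h4] at ha; simp at ha
        · exact Or.inl e
        · rw [← e, h4] at hc; simp at hc
        · exact Or.inr e
      omega
    all_goals simp at h
  · rintro ⟨a1, a2, a3⟩
    have : l = [p1, q1, p2, q2] := by
      refine List.Pairwise.eq_of_mem_iff hs (r := (· < ·)) ?_ ?_
      · simp; omega
      · intro x
        rw [hm]
        simp only [List.mem_cons, List.not_mem_nil, or_false]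
        tauto
    subst this
    simp [P2, List.getD_eq_getElem?_getD, h1, h2, h3, h4]

theorem key (n : ℕ) (w : List Bool) (hw : memL n w) (i : ℕ) (hi : i + 1 < n) :
    pairedSubword w (i + 1) = P2 ↔
      (w.take (2 * i + 1)).count true = i + 1 ∧ w[2 * i + 1]? = some false ∧
        w[2 * i + 2]? = some true := by
  obtain ⟨hT, hF⟩ := hw
  have hlen : w.length = 2 * n := by rw [← count_add]; omega
  obtain ⟨p1, hp1, -, wp1, cp1⟩ := occPos_spec w true i (by omega)
  obtain ⟨p2, hp2, -, wp2, cp2⟩ := occPos_spec w true (i + 1) (by omega)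
  obtain ⟨q1, hq1, -, wq1, cq1⟩ := occPos_spec w false i (by omega)
  obtain ⟨q2, hq2, -, wq2, cq2⟩ := occPos_spec w false (i + 1) (by omega)
  have hp : p1 < p2 := by
    by_contra h
    have := cnt_mono w true (not_lt.1 h); omega
  have hq : q1 < q2 := by
    by_contra h
    have := cnt_mono w false (not_lt.1 h); omega
  have hsum : ∀ m, m ≤ 2 * n → (w.take m).count true + (w.take m).count false = m := by
    intro m hm
    rw [count_add, List.length_take]; omega
  have l3 := (List.getElem?_eq_some_iff.1 wq1).1
  simp only [pairedSubword, Nat.add_sub_cancel, hp1, hp2, hq1, hq2]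
  rw [filter_iff w p1 p2 q1 q2 hp hq wp1 wp2 wq1 wq2]
  constructor
  · rintro ⟨a1, a2, a3⟩
    have b1 := cnt_lt w true a1 wp1
    have b2 := cnt_mono w true a2.le
    have b3 := hsum q1 (by omega)
    have hq1' : q1 = 2 * i + 1 := by omega
    subst hq1'
    refine ⟨by omega, wq1, ?_⟩
    have hl : 2 * i + 2 < w.length := by omega
    rcases hb : w[2 * i + 2]? with _ | b
    · rw [List.getElem?_eq_none_iff] at hb; omega
    · cases b
      · have b4 := cnt_succ w false (2 * i + 1)
        rw [if_pos wq1, show 2 * i + 1 + 1 = 2 * i + 2 by rfl] at b4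
        have := cnt_uniq w false hb wq2 (by rw [cq2]; omega)
        omega
      · rfl
  · rintro ⟨a1, a2, a3⟩
    have b1 := hsum (2 * i + 1) (by omega)
    have b2 : 2 * i + 1 = q1 := cnt_uniq w false a2 wq1 (by omega)
    have b4 := cnt_succ w true (2 * i + 1)
    rw [if_neg (by rw [a2]; simp), show 2 * i + 1 + 1 = 2 * i + 2 by rfl] at b4
    have b3 : 2 * i + 2 = p2 := cnt_uniq w true a3 wp2 (by rw [cp2]; omega)
    refine ⟨?_, by omega, ?_⟩
    · by_contra h
      have := cnt_mono w true (not_lt.1 h)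
      rw [← b2] at this
      omega
    · have : q2 ≠ p2 := by
        rintro rfl
        rw [wp2] at wq2
        simp at wq2
      omega

theorem card_match (n i : ℕ) (hi : i + 1 < n) :
    ((wordsF (2 * n) n).filter (fun w => pairedSubword w (i + 1) = P2)).card
      = (2 * i + 1).choose (i + 1) * (2 * (n - 1 - i) - 1).choose (n - 1 - i - 1) := by
  rw [← card_wordsF, ← card_wordsF, ← Finset.card_product]
  symm
  apply Finset.card_bij (fun (p : List Bool × List Bool) _ => p.1 ++ false :: true :: p.2)
  · rintro ⟨u, v⟩ h
    simp only [Finset.mem_product, mem_wordsF] at h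
    obtain ⟨⟨hu1, hu2⟩, hv1, hv2⟩ := h
    rw [Finset.mem_filter, mem_wordsF]
    have hL : (u ++ false :: true :: v).length = 2 * n := by simp; omega
    have hT : (u ++ false :: true :: v).count true = n := by simp; omega
    refine ⟨⟨hL, hT⟩, ?_⟩
    rw [key n _ ⟨hT, by have := count_add (u ++ false :: true :: v); omega⟩ i hi]
    rw [← hu1]
    simp [List.getElem?_append_right, hu2]
    rw [show 2 * i + 2 = u.length + 1 by omega]
    simp [List.getElem?_append_right]
  · rintro ⟨u, v⟩ h ⟨u', v'⟩ h' he
    simp only [Finset.mem_product, mem_wordsF] at h h'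
    have := List.append_inj he (h.1.1.trans h'.1.1.symm)
    simp at this
    rw [this.1, this.2]
  · intro w hw
    rw [Finset.mem_filter, mem_wordsF] at hw
    obtain ⟨⟨hL, hT⟩, hk⟩ := hw
    rw [key n _ ⟨hT, by have := count_add w; omega⟩ i hi] at hk
    obtain ⟨k1, k2, k3⟩ := hk
    have hw : w = w.take (2 * i + 1) ++ false :: true :: w.drop (2 * i + 3) := by
      conv_lhs => rw [← List.take_append_drop (2 * i + 1) w]
      rw [List.drop_eq_getElem_cons (by omega), List.drop_eq_getElem_cons (by omega)]
      rw [(List.getElem?_eq_some_iff.1 k2).2, (List.getElem?_eq_some_iff.1 k3).2]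
    refine ⟨(w.take (2 * i + 1), w.drop (2 * i + 3)), ?_, hw.symm⟩
    simp only [Finset.mem_product, mem_wordsF]
    have hc := congrArg (List.count true) hw
    rw [List.count_append] at hc
    simp at hc
    refine ⟨⟨by simp; omega, k1⟩, by simp; omega, by omega⟩

theorem total_P2_matches (n : ℕ) (hn : 1 ≤ n) :
    ∑ᶠ w ∈ {w : List Bool | memL n w}, pmch n P2 w
      = 4^(n-1) - (2*n-1).choose (n-1) := by
  have hset : {w : List Bool | memL n w} = ((wordsF (2 * n) n : Finset (List Bool)) : Set (List Bool)) := by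
    ext w
    rw [Finset.mem_coe, mem_wordsF]
    have := count_add w
    simp only [Set.mem_ofPred_eq, memL]
    omega
  rw [hset, finsum_mem_coe_finset]
  obtain ⟨m, rfl⟩ : ∃ m, n = m + 1 := ⟨n - 1, by omega⟩
  simp only [pmch, Finset.card_filter, Nat.add_sub_cancel]
  rw [Finset.sum_comm]
  have hI : Finset.Icc 1 m = (Finset.range m).image (· + 1) := by
    ext x
    simp only [Finset.mem_Icc, Finset.mem_image, Finset.mem_range]
    constructor
    · intro h
      exact ⟨x - 1, by omega, by omega⟩
    · rintro ⟨y, h, rfl⟩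
      omega
  rw [hI, Finset.sum_image (by intro a _ b _ h; simpa using h)]
  rw [show 2 * (m + 1) - 1 = 2 * m + 1 by omega, ← conv_final]
  apply Finset.sum_congr rfl
  intro i hi
  rw [Finset.mem_range] at hi
  rw [← Finset.card_filter, card_match (m + 1) i (by omega), Nat.add_sub_cancel]
end

section
/- For every n ≥ 4, the number of words L ∈ 𝓛_n with exactly one P1-match and exactly one P6-match (equivalently, paths with exactly one east step below the subdiagonal y = x − 1 and exactly one north step above the superdiagonal y = x + 1) equals (n−2)·(n−3)·2^{n−4}. -/
/-! Counting matches of `b b (!b) (!b)` on the reversed word. -/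

/-- Number of `b`-steps starting strictly on the `b`-side of the diagonal, for the reversed word. -/
def cc (b : Bool) : List Bool → ℕ
  | [] => 0
  | x :: u => cc b u + if x = b ∧ u.count (!b) < u.count b then 1 else 0

theorem cc_bound (b : Bool) (u : List Bool) : u.count b ≤ u.count (!b) + cc b u + 1 := by
  induction u with
  | nil => simp
  | cons x u ih =>
    rcases b <;> rcases x <;> simp [cc] at * <;> (try split_ifs) <;> omega

theorem occPos_snoc (w : List Bool) (x b : Bool) :
    occPos (w ++ [x]) b = occPos w b ++ (if x = b then [w.length] else []) := by
  unfold occPos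
  rw [List.length_append, List.length_singleton, List.range_succ, List.filter_append]
  congr 1
  · apply List.filter_congr
    intro j hj
    rw [List.mem_range] at hj
    simp [List.getD_eq_getElem?_getD, List.getElem?_append_left hj]
  · by_cases h : x = b <;> simp [h]

theorem occPos_length (w : List Bool) (b : Bool) : (occPos w b).length = w.count b := by
  induction w using List.reverseRecOn with
  | nil => simp [occPos]
  | append_singleton w x ih =>
    rw [occPos_snoc, List.length_append, ih, List.count_append]
    by_cases h : x = b <;> simp [h]

theorem occPos_mem (w : List Bool) (b : Bool) (j : ℕ) :
    j ∈ occPos w b ↔ j < w.length ∧ w.getD j true = b := by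
  unfold occPos
  simp only [List.mem_filter, List.mem_range, beq_iff_eq]
  refine and_congr_right fun h => ?_
  simp [h]

theorem occPos_sorted (w : List Bool) (b : Bool) : (occPos w b).Pairwise (· < ·) :=
  List.Pairwise.filter _ List.pairwise_lt_range

/-- the truncated matching condition -/
def mcond (b : Bool) (w : List Bool) (i : ℕ) : Prop :=
  1 ≤ i ∧ ((occPos w (!b)).length ≤ i - 1 ∨
    (occPos w b).getD i 0 < (occPos w (!b)).getD (i-1) 0)

open Classical in
theorem cond_count (b : Bool) (w : List Bool) :
    ((Finset.range (w.count b)).filter (mcond b w)).card = cc b w.reverse := by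
  induction w using List.reverseRecOn with
  | nil => simp [cc]
  | append_singleton w x ih =>
    rw [List.reverse_append, List.reverse_singleton, List.singleton_append, cc, ← ih]
    have hb : b ≠ !b := by cases b <;> simp
    by_cases h : x = b
    · subst h
      have e1 : occPos (w ++ [x]) x = occPos w x ++ [w.length] := by simp [occPos_snoc]
      have e2 : occPos (w ++ [x]) (!x) = occPos w (!x) := by simp [occPos_snoc]
      have e3 : (w ++ [x]).count x = w.count x + 1 := by simp
      have hlt : (occPos w (!x)).getD (w.count x - 1) 0 ≤ w.length := by
        by_cases hl : w.count x - 1 < (occPos w (!x)).length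
        · rw [List.getD_eq_getElem _ _ hl]
          exact ((occPos_mem w (!x) _).1 (List.getElem_mem hl)).1.le
        · rw [List.getD_eq_default _ _ (by omega)]; omega
      rw [e3, Finset.range_add_one, Finset.filter_insert]
      have hold : (Finset.range (w.count x)).filter (mcond x (w ++ [x])) =
          (Finset.range (w.count x)).filter (mcond x w) := by
        apply Finset.filter_congr
        intro i hi
        rw [Finset.mem_range] at hi
        unfold mcond
        rw [e1, e2, List.getD_append _ _ _ _ (by rw [occPos_length]; exact hi)]
      have hnew : mcond x (w ++ [x]) (w.count x) ↔ w.count (!x) < w.count x := by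
        unfold mcond
        rw [e1, e2, List.getD_append_right _ _ _ _ (by rw [occPos_length])]
        simp only [occPos_length, Nat.sub_self, List.getD_cons_zero]
        omega
      rw [hold]
      simp only [hnew, List.count_reverse, true_and]
      split_ifs with h1
      · rw [Finset.card_insert_of_notMem (by simp)]
      · rfl
    · have hx : x = !b := by cases b <;> cases x <;> simp_all
      subst hx
      have e1 : occPos (w ++ [!b]) b = occPos w b := by simp [occPos_snoc]
      have e2 : occPos (w ++ [!b]) (!b) = occPos w (!b) ++ [w.length] := by simp [occPos_snoc]
      have e3 : (w ++ [!b]).count b = w.count b := by simp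
      rw [e3]
      simp only [h, false_and, if_false, add_zero]
      congr 1
      apply Finset.filter_congr
      intro i hi
      rw [Finset.mem_range] at hi
      unfold mcond
      rw [e1, e2]
      refine and_congr_right fun h1 => ?_
      have hi' : i < (occPos w b).length := by rw [occPos_length]; exact hi
      have hlt : (occPos w b).getD i 0 < w.length := by
        rw [List.getD_eq_getElem _ _ hi']
        exact ((occPos_mem w b _).1 (List.getElem_mem hi')).1
      rw [List.length_append, List.length_singleton]
      rcases lt_trichotomy (i - 1) (occPos w (!b)).length with h2 | h2 | h2
      · rw [List.getD_append _ _ _ _ h2]; omega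
      · rw [List.getD_append_right _ _ _ _ h2.ge]
        simp only [h2, Nat.sub_self, List.getD_cons_zero]
        omega
      · omega

theorem paired_iff (n : ℕ) (b : Bool) (w : List Bool) (hb : w.count b = n)
    (hb' : w.count (!b) = n) (i : ℕ) (h1 : 1 ≤ i) (hi : i < n) :
    pairedSubword w i = [b, b, !b, !b] ↔
      (occPos w b).getD i 0 < (occPos w (!b)).getD (i-1) 0 := by
  have key : ∀ c, w.count c = n → ∃ p q, p < q ∧ (occPos w c).getD (i-1) 0 = p ∧
      (occPos w c).getD i 0 = q ∧ p < w.length ∧ q < w.length ∧ w.getD p true = c ∧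
      w.getD q true = c := by
    intro c hc
    have hl : (occPos w c).length = n := by rw [occPos_length, hc]
    have g1 : i - 1 < (occPos w c).length := by omega
    have g2 : i < (occPos w c).length := by omega
    refine ⟨(occPos w c)[i-1], (occPos w c)[i], ?_, List.getD_eq_getElem _ _ g1,
      List.getD_eq_getElem _ _ g2, ?_⟩
    · exact List.pairwise_iff_getElem.1 (occPos_sorted w c) _ _ g1 g2 (by omega)
    · have a1 := (occPos_mem w c _).1 (List.getElem_mem g1)
      have a2 := (occPos_mem w c _).1 (List.getElem_mem g2)
      exact ⟨a1.1, a2.1, a1.2, a2.2⟩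
  obtain ⟨p, q, hpq, ep, eq, pl, ql, wp, wq⟩ := key b hb
  obtain ⟨r, s, hrs, er, es, rl, sl, wr, ws⟩ := key (!b) hb'
  rw [eq, er]
  have hmem : ∀ j, j ∈ (List.range w.length).filter
      (fun j => ([(occPos w true).getD (i-1) 0, (occPos w true).getD i 0,
        (occPos w false).getD (i-1) 0, (occPos w false).getD i 0] : List ℕ).contains j) ↔
      j = p ∨ j = q ∨ j = r ∨ j = s := by
    intro j
    rw [List.mem_filter, List.mem_range]
    cases b
    · simp only [Bool.not_false] at er es
      rw [ep, eq, er, es]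
      simp
      constructor
      · rintro ⟨_, h⟩; tauto
      · intro h
        refine ⟨?_, by tauto⟩
        rcases h with h | h | h | h <;> omega
    · simp only [Bool.not_true] at er es
      rw [ep, eq, er, es]
      simp
      intro h
      rcases h with h | h | h | h <;> omega
  have hsort : ((List.range w.length).filter
      (fun j => ([(occPos w true).getD (i-1) 0, (occPos w true).getD i 0,
        (occPos w false).getD (i-1) 0, (occPos w false).getD i 0] : List ℕ).contains j)).Pairwise
      (· < ·) := List.Pairwise.filter _ List.pairwise_lt_range
  unfold pairedSubword
  simp only
  generalize (List.range w.length).filter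
      (fun j => ([(occPos w true).getD (i-1) 0, (occPos w true).getD i 0,
        (occPos w false).getD (i-1) 0, (occPos w false).getD i 0] : List ℕ).contains j) = l at *
  have hne : b ≠ !b := by cases b <;> simp
  constructor
  · intro h
    have hlen : l.length = 4 := by simpa using congrArg List.length h
    obtain ⟨x1, x2, x3, x4, rfl⟩ : ∃ x1 x2 x3 x4, l = [x1, x2, x3, x4] := by
      obtain ⟨x1, l1, rfl⟩ := List.exists_cons_of_length_eq_add_one hlen
      obtain ⟨x2, l2, rfl⟩ := List.exists_cons_of_length_eq_add_one (Nat.succ.inj hlen)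
      simp only [List.length_cons] at hlen
      obtain ⟨x3, x4, rfl⟩ := List.length_eq_two.1 (by omega : l2.length = 2)
      exact ⟨x1, x2, x3, x4, rfl⟩
    ·
      simp only [List.map_cons, List.map_nil, List.cons.injEq, and_true] at h
      obtain ⟨y1, y2, y3, y4⟩ := h
      simp only [List.pairwise_cons, List.mem_cons, List.not_mem_nil, or_false] at hsort
      have z1 := hsort.1 x2 (by simp)
      have z2 := hsort.2.1 x3 (by simp)
      have z3 := hsort.2.2.1 x4 (by simp)
      have m2 := (hmem q).2 (by simp)
      have m3 := (hmem r).2 (by simp)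
      simp only [List.mem_cons, List.not_mem_nil, or_false] at m2 m3
      have q12 : q = x1 ∨ q = x2 := by
        rcases m2 with h | h | h | h
        · exact Or.inl h
        · exact Or.inr h
        · rw [h, y3] at wq; exact absurd wq.symm hne
        · rw [h, y4] at wq; exact absurd wq.symm hne
      have r34 : r = x3 ∨ r = x4 := by
        rcases m3 with h | h | h | h
        · rw [h, y1] at wr; exact absurd wr hne
        · rw [h, y2] at wr; exact absurd wr hne
        · exact Or.inl h
        · exact Or.inr h
      omega
  · intro h
    have : l = [p, q, r, s] := by
      apply List.Perm.eq_of_pairwise (le := (· < ·))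
      · intro a b _ _ h1 h2; omega
      · exact hsort
      · simp; omega
      · rw [List.perm_ext_iff_of_nodup]
        · intro a; rw [hmem]; simp
        · exact hsort.imp (fun h => ne_of_lt h)
        · simp; omega
    rw [this]
    simp only [List.map_cons, List.map_nil, wp, wq, wr, ws]

theorem pmch_eq_s12 (n : ℕ) (b : Bool) (w : List Bool) (hb : w.count b = n)
    (hb' : w.count (!b) = n) : pmch n [b, b, !b, !b] w = cc b w.reverse := by
  classical
  rw [← cond_count, pmch]
  congr 1
  ext i
  simp only [Finset.mem_filter, Finset.mem_Icc, Finset.mem_range, mcond, occPos_length, hb, hb']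
  constructor
  · rintro ⟨⟨h1, h2⟩, h3⟩
    refine ⟨by omega, h1, Or.inr ((paired_iff n b w hb hb' i h1 (by omega)).1 h3)⟩
  · rintro ⟨h0, h1, h2⟩
    refine ⟨⟨h1, by omega⟩, (paired_iff n b w hb hb' i h1 h0).2 ?_⟩
    rcases h2 with h2 | h2
    · omega
    · exact h2

/-- all words of length `m` -/
def wds : ℕ → Finset (List Bool)
  | 0 => {[]}
  | m+1 => (wds m).image (List.cons true) ∪ (wds m).image (List.cons false)

theorem mem_wds (m : ℕ) (u : List Bool) : u ∈ wds m ↔ u.length = m := by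
  induction m generalizing u with
  | zero => simp [wds]
  | succ m ih =>
    cases u with
    | nil => simp [wds]
    | cons x u => cases x <;> simp [wds, ih]

theorem card_wds (m : ℕ) (P : List Bool → Prop) [DecidablePred P] :
    ((wds (m+1)).filter P).card = ((wds m).filter (fun u => P (true :: u))).card +
      ((wds m).filter (fun u => P (false :: u))).card := by
  rw [wds, Finset.filter_union, Finset.card_union_of_disjoint, Finset.filter_image,
    Finset.filter_image, Finset.card_image_of_injective _ List.cons_injective,
    Finset.card_image_of_injective _ List.cons_injective]
  rw [Finset.disjoint_left]
  intro u h1 h2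
  simp only [Finset.mem_filter, Finset.mem_image] at h1 h2
  obtain ⟨⟨x, _, rfl⟩, _⟩ := h1
  obtain ⟨⟨y, _, h⟩, _⟩ := h2
  simp at h

/-- number of words of length `m` ending at height `d` with given statistics -/
def F (m : ℕ) (d : ℤ) (a b : ℕ) : ℕ :=
  ((wds m).filter (fun u => (u.count true : ℤ) - u.count false = d ∧
    cc true u = a ∧ cc false u = b)).card

theorem F_zero_hi (m : ℕ) (d : ℤ) (a b : ℕ) (h : (a : ℤ) + 2 ≤ d) : F m d a b = 0 := by
  rw [F, Finset.card_eq_zero, Finset.filter_eq_empty_iff]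
  rintro u _ ⟨h1, h2, h3⟩
  have := cc_bound true u
  simp at this
  omega

theorem F_zero_lo (m : ℕ) (d : ℤ) (a b : ℕ) (h : d ≤ -(b : ℤ) - 2) : F m d a b = 0 := by
  rw [F, Finset.card_eq_zero, Finset.filter_eq_empty_iff]
  rintro u _ ⟨h1, h2, h3⟩
  have := cc_bound false u
  simp at this
  omega

/-- the generic recursion -/
theorem F_rec (m : ℕ) (d : ℤ) (a b a' b' : ℕ)
    (ha : a = a' + if 2 ≤ d then 1 else 0) (hb : b = b' + if d ≤ -2 then 1 else 0) :
    F (m+1) d a b = F m (d-1) a' b + F m (d+1) a b' := by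
  unfold F
  rw [card_wds]
  congr 2
  · apply Finset.filter_congr
    intro u _
    simp [cc]
    split_ifs at * <;> omega
  · apply Finset.filter_congr
    intro u _
    simp [cc]
    split_ifs at * <;> omega

theorem Fbase (d : ℤ) (a b : ℕ) : F 0 d a b = if d = 0 ∧ a = 0 ∧ b = 0 then 1 else 0 := by
  unfold F wds
  rw [Finset.card_filter, Finset.sum_singleton]
  apply if_congr _ rfl rfl
  simp only [cc, List.count_nil]
  omega

theorem g_succ (m a b : ℕ) : F (m+1) 0 a b = F m (-1) a b + F m 1 a b := by
  rw [F_rec m 0 a b a b (by simp) (by simp)]; norm_num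

theorem F_one (m a b : ℕ) : F (m+1) 1 a b = F m 0 a b + F m 2 a b := by
  rw [F_rec m 1 a b a b (by simp) (by simp)]; norm_num

theorem F_mone (m a b : ℕ) : F (m+1) (-1) a b = F m (-2) a b + F m 0 a b := by
  rw [F_rec m (-1) a b a b (by simp) (by simp)]; norm_num

theorem F_two (m b : ℕ) : F (m+2) 2 1 b = F m 0 0 b := by
  rw [F_rec (m+1) 2 1 b 0 b (by simp) (by simp), F_zero_hi (m+1) (2+1) 1 b (by norm_num)]
  norm_num
  rw [F_one, F_zero_hi m 2 0 b (by norm_num)]; simp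

theorem F_mtwo (m a : ℕ) : F (m+2) (-2) a 1 = F m 0 a 0 := by
  rw [F_rec (m+1) (-2) a 1 a 0 (by simp) (by simp), F_zero_lo (m+1) (-2-1) a 1 (by norm_num)]
  norm_num
  rw [F_mone, F_zero_lo m (-2) a 0 (by norm_num)]; simp

theorem g_two (m a b : ℕ) :
    F (m+2) 0 a b = 2 * F m 0 a b + F m 2 a b + F m (-2) a b := by
  rw [g_succ, F_one, F_mone]; ring

theorem g00 (k : ℕ) : F (2*k) 0 0 0 = 2^k := by
  induction k with
  | zero => simp [Fbase]
  | succ k ih =>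
    rw [show 2*(k+1) = 2*k+2 by ring, g_two, F_zero_hi _ 2 0 0 (by norm_num),
      F_zero_lo _ (-2) 0 0 (by norm_num), ih]; ring

theorem g10 (k : ℕ) : F (2*(k+1)) 0 1 0 = k * 2^(k-1) := by
  induction k with
  | zero => simp [Fbase, g_two]
  | succ k ih =>
    rw [show 2*(k+1+1) = 2*(k+1)+2 by ring, g_two, F_zero_lo _ (-2) 1 0 (by norm_num), ih,
      show 2*(k+1) = 2*k+2 by ring, F_two, g00]
    cases k <;> simp
    ring

theorem g01 (k : ℕ) : F (2*(k+1)) 0 0 1 = k * 2^(k-1) := by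
  induction k with
  | zero => simp [Fbase, g_two]
  | succ k ih =>
    rw [show 2*(k+1+1) = 2*(k+1)+2 by ring, g_two, F_zero_hi _ 2 0 1 (by norm_num), ih,
      show 2*(k+1) = 2*k+2 by ring, F_mtwo, g00]
    cases k <;> simp
    ring

theorem g11 (k : ℕ) : F (2*(k+3)) 0 1 1 = (k+1) * k * 2^(k-1) := by
  induction k with
  | zero =>
    have e1 : F (0+2) 2 1 1 = 0 := by rw [F_two]; simp [Fbase]
    have e2 : F (0+2) (-2) 1 1 = 0 := by rw [F_mtwo]; simp [Fbase]
    have e3 : F (2+2) 2 1 1 = 0 := by rw [F_two]; exact g01 0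
    have e4 : F (2+2) (-2) 1 1 = 0 := by rw [F_mtwo]; exact g10 0
    have e5 : F (0+2) 0 1 1 = 0 := by rw [g_two]; simp [Fbase]
    have e6 : F (2+2) 0 1 1 = 0 := by rw [g_two]; simp at e1 e2 e5; simp [e1, e2, e5]
    show F (4+2) 0 1 1 = _
    rw [g_two]
    simp at e3 e4 e6
    simp [e3, e4, e6]
  | succ k ih =>
    rw [show 2*(k+1+3) = 2*(k+3)+2 by ring, g_two, ih,
      show 2*(k+3) = 2*(k+1+1)+2 by ring, F_two, F_mtwo, g01, g10]
    cases k <;> simp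
    ring

theorem count_one_P1_one_P6 (n : ℕ) (hn : 4 ≤ n) :
    {w : List Bool | memL n w ∧ pmch n P1 w = 1 ∧ pmch n P6 w = 1}.ncard
      = (n-2) * (n-3) * 2^(n-4) := by
  have hS : {w : List Bool | memL n w ∧ pmch n P1 w = 1 ∧ pmch n P6 w = 1} =
      List.reverse '' (((wds (2*n)).filter (fun u => (u.count true : ℤ) - u.count false = 0 ∧
        cc true u = 1 ∧ cc false u = 1) : Finset (List Bool)) : Set (List Bool)) := by
    ext w
    simp only [Set.mem_ofPred_eq, Set.mem_image, Finset.coe_filter, mem_wds, memL]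
    have key : memL n w → (pmch n P1 w = cc true w.reverse ∧ pmch n P6 w = cc false w.reverse) :=
      fun h => ⟨pmch_eq_s12 n true w h.1 h.2, pmch_eq_s12 n false w h.2 h.1⟩
    have hlen := List.count_true_add_count_false w
    constructor
    · rintro ⟨h, h1, h2⟩
      obtain ⟨k1, k2⟩ := key h
      refine ⟨w.reverse, ⟨?_, ?_, ?_, ?_⟩, by simp⟩
      · rw [List.length_reverse]; omega
      · rw [List.count_reverse, List.count_reverse]; omega
      · omega
      · omega
    · rintro ⟨u, ⟨h1, h2, h3, h4⟩, rfl⟩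
      rw [List.reverse_reverse] at key
      rw [List.count_reverse, List.count_reverse, List.length_reverse] at *
      have hm : memL n u.reverse := by
        unfold memL
        rw [List.count_reverse, List.count_reverse]; omega
      obtain ⟨k1, k2⟩ := key hm
      refine ⟨by omega, by omega, by omega⟩
  rw [hS, Set.ncard_image_of_injective _ List.reverse_injective, Set.ncard_coe_finset]
  obtain ⟨k, rfl⟩ : ∃ k, n = k + 3 := ⟨n - 3, by omega⟩
  have := g11 k
  rw [F] at this
  rw [this]
  congr 1
end

section
/- For every n ≥ 1, the number of words L ∈ 𝓛_n with no bounce off the diagonal equals 2·C_n, twice the n-th Catalan number. -/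
/-- The path of `w` passes through the interior diagonal point `[i,i]`:
the prefix `w_1 ⋯ w_{2i}` contains exactly `i` `E`'s and `i` `N`'s. -/
abbrev onDiag (w : List Bool) (i : ℕ) : Prop :=
  (w.take (2*i)).count true = i ∧ (w.take (2*i)).count false = i

/-- The number of crossings of the diagonal: interior diagonal points `[i,i]` with
`w_{2i} = w_{2i+1}`. -/
def crossCount (n : ℕ) (w : List Bool) : ℕ :=
  ((Finset.Icc 1 (n-1)).filter (fun i =>
    onDiag w i ∧ w.getD (2*i-1) false = w.getD (2*i) false)).card

/-- The number of bounces off the diagonal: interior diagonal points `[i,i]` with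
`w_{2i} ≠ w_{2i+1}`. -/
def bounceCount (n : ℕ) (w : List Bool) : ℕ :=
  ((Finset.Icc 1 (n-1)).filter (fun i =>
    onDiag w i ∧ w.getD (2*i-1) false ≠ w.getD (2*i) false)).card

/-- Ballot numbers: suffixes of length `m` from height `k` staying nonnegative, ending at `0`. -/
def ballotD : ℕ → ℕ → ℕ
  | 0, 0 => 1
  | 0, _ + 1 => 0
  | m + 1, 0 => ballotD m 1
  | m + 1, k + 1 => ballotD m k + ballotD m (k + 2)

/-- signed step -/
def stp (c : Bool) : ℤ := if c then 1 else -1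

/-- Suffixes of length `m` from signed height `h`, previous letter `p`, ending at `0`
without a bounce. -/
def goodSet : ℕ → ℤ → Bool → Finset (List Bool)
  | 0, h, _ => if h = 0 then {[]} else ∅
  | m + 1, h, p =>
    (Finset.univ.filter (fun c : Bool => h = 0 → p = c)).biUnion
      (fun c => (goodSet m (h + stp c) c).image (List.cons c))

lemma ht_cons (c : Bool) (w : List Bool) :
    ((c :: w).count true : ℤ) - (c :: w).count false
      = stp c + ((w.count true : ℤ) - w.count false) := by
  cases c <;> simp [stp] <;> ring

lemma mem_goodSet (m : ℕ) : ∀ (h : ℤ) (p : Bool) (w : List Bool),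
    w ∈ goodSet m h p ↔ w.length = m ∧ h + ((w.count true : ℤ) - w.count false) = 0 ∧
      ∀ j < w.length, h + (((w.take j).count true : ℤ) - (w.take j).count false) = 0 →
        (p :: w).getD j false = w.getD j false := by
  induction m with
  | zero =>
    intro h p w
    cases w with
    | nil => by_cases hh : h = 0 <;> simp [goodSet, hh]
    | cons c w => by_cases hh : h = 0 <;> simp [goodSet, hh]
  | succ m ih =>
    intro h p w
    cases w with
    | nil => simp [goodSet]
    | cons c w =>
      have key : (c :: w) ∈ goodSet (m+1) h p ↔
          (h = 0 → p = c) ∧ w ∈ goodSet m (h + stp c) c := by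
        simp only [goodSet, Finset.mem_biUnion, Finset.mem_filter, Finset.mem_univ, true_and,
          Finset.mem_image, List.cons.injEq]
        constructor
        · rintro ⟨a, h1, b, h2, rfl, rfl⟩
          exact ⟨h1, h2⟩
        · rintro ⟨h1, h2⟩
          exact ⟨c, h1, w, h2, rfl, rfl⟩
      rw [key, ih, ht_cons, ← add_assoc]
      constructor
      · rintro ⟨h1, h2, h3, h4⟩
        refine ⟨by simp [h2], h3, ?_⟩
        intro j hj hz
        cases j with
        | zero => simpa using h1 (by simpa using hz)
        | succ j =>
          rw [List.take_succ_cons, ht_cons, ← add_assoc] at hz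
          simpa using h4 j (by simpa using hj) hz
      · rintro ⟨h2, h3, h4⟩
        refine ⟨fun hz => by simpa using h4 0 (by simp) (by simpa using hz),
          by simpa using h2, h3, ?_⟩
        intro j hj hz
        have := h4 (j+1) (by simpa using hj)
          (by rw [List.take_succ_cons, ht_cons, ← add_assoc]; exact hz)
        simpa using this

lemma card_goodSet_succ (m : ℕ) (h : ℤ) (p : Bool) :
    (goodSet (m+1) h p).card = (if h = 0 → p = true then (goodSet m (h+1) true).card else 0)
      + (if h = 0 → p = false then (goodSet m (h-1) false).card else 0) := by
  rw [goodSet, Finset.card_biUnion]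
  · rw [Finset.sum_filter, Fintype.sum_bool]
    simp only [Finset.card_image_of_injective _ List.cons_injective]
    rfl
  · intro a _ b _ hab
    rw [Function.onFun, Finset.disjoint_left]
    intro w ha hb
    simp only [Finset.mem_image] at ha hb
    obtain ⟨u, _, rfl⟩ := ha
    obtain ⟨v, _, hv⟩ := hb
    simp only [List.cons.injEq] at hv
    exact hab hv.1.symm

lemma goodSet_indep (m : ℕ) (h : ℤ) (hh : h ≠ 0) (p q : Bool) :
    goodSet m h p = goodSet m h q := by
  cases m <;> simp [goodSet, hh]

lemma card_goodSet (m : ℕ) : ∀ k : ℕ, (goodSet m (k:ℤ) false).card = ballotD m k ∧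
    (goodSet m (-(k:ℤ)) true).card = ballotD m k := by
  induction m with
  | zero =>
    intro k
    cases k with
    | zero => simp [goodSet, ballotD]
    | succ k =>
      have h1 : ((k:ℤ) + 1) ≠ 0 := by omega
      have h2 : -((k:ℤ) + 1) ≠ 0 := by omega
      constructor
      · simp [goodSet, ballotD, h1]
      · simp only [goodSet, ballotD]
        push_cast
        rw [if_neg h2]; rfl
  | succ m ih =>
    intro k
    rw [card_goodSet_succ, card_goodSet_succ]
    cases k with
    | zero =>
      have h1 := ih 1
      have e1 := goodSet_indep m 1 (by simp) true false
      have e2 := goodSet_indep m (-1) (by simp) true false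
      simp only [Nat.cast_one] at h1
      simp [ballotD, h1, e1, ← e2]
    | succ k =>
      have h1 : ((k + 1 : ℕ):ℤ) ≠ 0 := by omega
      have h2 : -((k + 1 : ℕ):ℤ) ≠ 0 := by omega
      simp only [h1, h2, false_imp_iff, if_true, ballotD]
      have a := ih k
      have b := ih (k+2)
      rw [goodSet_indep m ((k+1:ℕ) + 1 : ℤ) (by omega) true false,
        goodSet_indep m (-(k+1:ℕ) - 1 : ℤ) (by omega) false true]
      have e1 : ((k+1:ℕ) + 1 : ℤ) = ((k+2 : ℕ) : ℤ) := by push_cast; ring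
      have e2 : ((k+1:ℕ) - 1 : ℤ) = (k : ℤ) := by push_cast; ring
      have e3 : (-((k+1:ℕ):ℤ) - 1 : ℤ) = -((k+2 : ℕ) : ℤ) := by push_cast; ring
      have e4 : (-((k+1:ℕ):ℤ) + 1 : ℤ) = -(k : ℤ) := by push_cast; ring
      rw [e1, e2, e3, e4, a.1, a.2, b.1, b.2]
      omega

lemma ballotD_lt (m : ℕ) : ∀ k, m < k → ballotD m k = 0 := by
  induction m with
  | zero => intro k hk; cases k with
    | zero => omega
    | succ k => rfl
  | succ m ih => intro k hk; cases k with
    | zero => omega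
    | succ k => rw [ballotD, ih k (by omega), ih (k+2) (by omega)]

lemma ballotD_self (m : ℕ) : ballotD m m = 1 := by
  induction m with
  | zero => rfl
  | succ m ih => rw [ballotD, ih, ballotD_lt m (m+2) (by omega)]

lemma ballotD_formula (m : ℕ) : ∀ h d, m = h + 2*d + 2 →
    ballotD m h + m.choose d = m.choose (d+1) := by
  induction m with
  | zero => intro h d hm; omega
  | succ m ih =>
    intro h d hm
    cases h with
    | zero =>
      rw [ballotD]
      cases d with
      | zero =>
        obtain rfl : m = 1 := by omega
        rw [ballotD_self]; rfl
      | succ e =>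
        have := ih 1 e (by omega)
        have hs : m.choose (e+1+1) = m.choose (e+1) :=
          Nat.choose_symm_of_eq_add (by omega)
        rw [Nat.choose_succ_succ', Nat.choose_succ_succ' m (e+1)]
        omega
    | succ k =>
      rw [ballotD]
      have a := ih k d (by omega)
      cases d with
      | zero =>
        obtain rfl : m = k + 2 := by omega
        rw [ballotD_self, Nat.choose_succ_succ]
        simp at a ⊢
        omega
      | succ e =>
        have b := ih (k+2) e (by omega)
        rw [Nat.choose_succ_succ', Nat.choose_succ_succ' m (e+1)]
        omega

lemma ballotD_catalan (k : ℕ) :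
    ballotD (2*(k+1)) 0 = (2*(k+1)).choose (k+1) / (k+1+1) := by
  have h := ballotD_formula (2*(k+1)) 0 k (by omega)
  have h2 := Nat.choose_succ_right_eq (2*(k+1)) k
  rw [show 2*(k+1) - k = k+2 by omega] at h2
  symm
  apply Nat.div_eq_of_eq_mul_left (by omega)
  generalize (2*(k+1)).choose (k+1) = x at *
  generalize (2*(k+1)).choose k = y at *
  subst h
  nlinarith

lemma noBounce_iff (k : ℕ) (p : Bool) (w : List Bool) :
    (memL (k+1) (p :: w) ∧ bounceCount (k+1) (p :: w) = 0) ↔ w ∈ goodSet (2*k+1) (stp p) p := by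
  rw [mem_goodSet]
  have hlen : ∀ u : List Bool, u.count true + u.count false = u.length :=
    fun u => by simpa using List.count_not_add_count u false
  have hl := hlen (p :: w)
  have hc := ht_cons p w
  rw [List.length_cons] at hl
  simp only [bounceCount, Finset.card_eq_zero, Finset.filter_eq_empty_iff, Finset.mem_Icc, memL,
    onDiag]
  constructor
  · rintro ⟨⟨h1, h2⟩, h3⟩
    refine ⟨by omega, by omega, ?_⟩
    intro j hj hz
    have ht := hlen ((p::w).take (j+1))
    rw [← ht_cons, ← List.take_succ_cons] at hz
    rw [List.length_take, List.length_cons] at ht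
    obtain ⟨i, hi⟩ : ∃ i, j + 1 = 2 * i :=
      ⟨((p::w).take (j+1)).count true, by omega⟩
    rw [hi] at hz ht
    have := h3 (x := i) ⟨by omega, by omega⟩
    rw [← hi] at this hz ht
    simp only [Nat.add_sub_cancel, List.getD_cons_succ] at this
    by_contra hne
    exact this ⟨⟨by omega, by omega⟩, hne⟩
  · rintro ⟨h1, h2, h3⟩
    refine ⟨⟨by omega, by omega⟩, ?_⟩
    rintro i hi ⟨⟨ha, hb⟩, hne⟩
    obtain ⟨j, hj⟩ : ∃ j, 2 * i = j + 1 := ⟨2*i-1, by omega⟩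
    rw [hj] at ha hb hne
    apply hne
    rw [Nat.add_sub_cancel, List.getD_cons_succ]
    apply h3 j (by omega)
    rw [← ht_cons, ← List.take_succ_cons]
    omega

theorem count_no_bounce_eq_two_catalan (n : ℕ) (hn : 1 ≤ n) :
    {w : List Bool | memL n w ∧ bounceCount n w = 0}.ncard
      = 2 * ((2*n).choose n / (n+1)) := by
  obtain ⟨k, rfl⟩ : ∃ k, n = k + 1 := ⟨n - 1, by omega⟩
  rw [← ballotD_catalan]
  have hset : {w : List Bool | memL (k+1) w ∧ bounceCount (k+1) w = 0}
      = ((Finset.univ.biUnion fun p : Bool =>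
          (goodSet (2*k+1) (stp p) p).image (List.cons p) : Finset (List Bool)) : Set _) := by
    ext w
    simp only [Set.mem_ofPred_eq, Finset.mem_coe, Finset.mem_biUnion, Finset.mem_univ, true_and,
      Finset.mem_image]
    cases w with
    | nil => simp [memL]
    | cons p w =>
      rw [noBounce_iff]
      constructor
      · intro h
        exact ⟨p, w, h, rfl⟩
      · rintro ⟨q, v, h, he⟩
        simp only [List.cons.injEq] at he
        obtain ⟨rfl, rfl⟩ := he
        exact h
  rw [hset, Set.ncard_coe_finset, Finset.card_biUnion]
  · simp only [Finset.card_image_of_injective _ List.cons_injective, Fintype.sum_bool]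
    have h := card_goodSet (2*k+1) 1
    rw [goodSet_indep _ _ (by simp) false true, goodSet_indep _ _ (by simp) true false] at h
    have e : ballotD (2*(k+1)) 0 = ballotD (2*k+1) 1 := rfl
    have h1 : (goodSet (2*k+1) (stp true) true).card = ballotD (2*k+1) 1 := h.1
    have h2 : (goodSet (2*k+1) (stp false) false).card = ballotD (2*k+1) 1 := h.2
    rw [h1, h2, e]
    ring
  · intro a _ b _ hab
    rw [Function.onFun, Finset.disjoint_left]
    intro w ha hb
    simp only [Finset.mem_image] at ha hb
    obtain ⟨u, _, rfl⟩ := ha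
    obtain ⟨v, _, hv⟩ := hb
    simp only [List.cons.injEq] at hv
    exact hab hv.1.symm
end
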